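/- Let n ≥ 2, d > 0, and 0 < a < b, and let Ω = {x ∈ ℝⁿ : a < |x| < b} be the open annulus. Suppose u is a continuous function on the closed annulus {a ≤ |x| ≤ b} that is a viscosity supersolution of (1 − d div(Du/√(1 + |Du|²)))·√(1 + |Du|²) ≥ 1 in Ω. Define w(x) = min_{|y| = |x|} u(y). Then w is also a continuous viscosity supersolution of (1 − d div(Dw/√(1 + |Dw|²)))·√(1 + |Dw|²) ≥ 1 in Ω. -/

import Mathlib

/-!
A linear isometry `L` of `ℝⁿ` transports test functions: if `w - φ` has a local minimum at `x̄` and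
`y₀` is a point of the sphere through `x̄` with `u y₀ = w x̄`, take `L` with `L x̄ = y₀` (a reflection
suffices). Since `u y ≥ w (L⁻¹ y)` with equality at `y₀`, the function `u - φ ∘ L⁻¹` has a local
minimum at `y₀`, so the supersolution inequality for `u` holds for `φ ∘ L⁻¹` at `y₀`. The gradient is
equivariant under `L` (`gradient_comp_symm`) and the trace is conjugation invariant
(`divg_flux0_comp_symm`), so this is the inequality for `φ` at `x̄`.

Continuity of `w` follows from the uniform continuity of `u` on the compact annulus: rescaling a
minimizer on one sphere to a nearby sphere moves it by the difference of the radii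
(`envelope_lt_add`).
-/

open Metric Set

/-- The divergence of a vector field on `ℝⁿ`: the trace of its derivative. -/
noncomputable def divg {n : ℕ} (F : EuclideanSpace ℝ (Fin n) → EuclideanSpace ℝ (Fin n))
    (x : EuclideanSpace ℝ (Fin n)) : ℝ :=
  LinearMap.trace ℝ (EuclideanSpace ℝ (Fin n)) (fderiv ℝ F x).toLinearMap

/-- The vector field `Dφ/√(1 + |Dφ|²)`. -/
noncomputable def flux0 {n : ℕ} (φ : EuclideanSpace ℝ (Fin n) → ℝ)
    (y : EuclideanSpace ℝ (Fin n)) : EuclideanSpace ℝ (Fin n) :=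
  (Real.sqrt (1 + ‖gradient φ y‖ ^ 2))⁻¹ • gradient φ y

/-- `u` is a viscosity supersolution of
`(1 − d div(Du/√(1+|Du|²)))·√(1+|Du|²) ≥ 1` on the open set `U`. -/
def IsSupersolOne {n : ℕ} (d : ℝ) (U : Set (EuclideanSpace ℝ (Fin n)))
    (u : EuclideanSpace ℝ (Fin n) → ℝ) : Prop :=
  ∀ φ : EuclideanSpace ℝ (Fin n) → ℝ, ContDiff ℝ 2 φ →
    ∀ xb ∈ U, IsLocalMinOn (fun y => u y - φ y) U xb →
      (1 - d * divg (flux0 φ) xb) * Real.sqrt (1 + ‖gradient φ xb‖ ^ 2) ≥ 1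

lemma gradient_comp_symm {n : ℕ}
    (L : EuclideanSpace ℝ (Fin n) ≃ₗᵢ[ℝ] EuclideanSpace ℝ (Fin n))
    (φ : EuclideanSpace ℝ (Fin n) → ℝ) (y : EuclideanSpace ℝ (Fin n)) :
    gradient (φ ∘ L.symm) y = L (gradient φ (L.symm y)) := by
  have h : fderiv ℝ (φ ∘ L.symm) y
      = (fderiv ℝ φ (L.symm y)).comp
        (L.symm.toContinuousLinearEquiv : EuclideanSpace ℝ (Fin n) →L[ℝ] _) :=
    L.symm.toContinuousLinearEquiv.comp_right_fderiv
  refine ext_inner_right ℝ fun v => ?_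
  rw [L.inner_map_eq_flip]
  simp [gradient, h]

/-- The divergence of the normalized gradient is invariant under linear isometries. No
differentiability is needed, because composition with an equivalence also transports the junk
value of `fderiv`. -/
lemma divg_flux0_comp_symm {n : ℕ}
    (L : EuclideanSpace ℝ (Fin n) ≃ₗᵢ[ℝ] EuclideanSpace ℝ (Fin n))
    (φ : EuclideanSpace ℝ (Fin n) → ℝ) (y : EuclideanSpace ℝ (Fin n)) :
    divg (flux0 (φ ∘ L.symm)) y = divg (flux0 φ) (L.symm y) := by
  have h : flux0 (φ ∘ L.symm) = L.toContinuousLinearEquiv ∘ (flux0 φ ∘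
      L.symm.toContinuousLinearEquiv) := by
    funext z
    simp [flux0, gradient_comp_symm]
  rw [divg, divg, h, L.toContinuousLinearEquiv.comp_fderiv,
    L.symm.toContinuousLinearEquiv.comp_right_fderiv]
  exact LinearMap.trace_conj' _ L.toLinearEquiv

lemma exists_isometry_map_eq {n : ℕ} {x y : EuclideanSpace ℝ (Fin n)} (h : ‖x‖ = ‖y‖) :
    ∃ L : EuclideanSpace ℝ (Fin n) ≃ₗᵢ[ℝ] EuclideanSpace ℝ (Fin n), L x = y :=
  ⟨_, Submodule.reflection_sub h⟩

/-- One half of the modulus of continuity of the radial minimum envelope: a minimizer of `u` on the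
sphere through `x'`, rescaled to the sphere through `x`, is a competitor there. -/
lemma envelope_lt_add {n : ℕ} {a b ε δ : ℝ} (ha : 0 < a)
    {u w : EuclideanSpace ℝ (Fin n) → ℝ}
    (hw : ∀ x : EuclideanSpace ℝ (Fin n), a ≤ ‖x‖ → ‖x‖ ≤ b →
      IsLeast (u '' Metric.sphere 0 ‖x‖) (w x))
    (hδ : ∀ x ∈ {x : EuclideanSpace ℝ (Fin n) | a ≤ ‖x‖ ∧ ‖x‖ ≤ b},
      ∀ y ∈ {x : EuclideanSpace ℝ (Fin n) | a ≤ ‖x‖ ∧ ‖x‖ ≤ b}, dist x y < δ →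
        dist (u x) (u y) < ε)
    {x x' : EuclideanSpace ℝ (Fin n)} (hx : a ≤ ‖x‖ ∧ ‖x‖ ≤ b) (hx' : a ≤ ‖x'‖ ∧ ‖x'‖ ≤ b)
    (hxx : dist x x' < δ) : w x < w x' + ε := by
  obtain ⟨y, hy, hyw⟩ := (hw x' hx'.1 hx'.2).1
  have hyn : ‖y‖ = ‖x'‖ := by simpa using hy
  have hpos : 0 < ‖x'‖ := ha.trans_le hx'.1
  set z := (‖x‖ / ‖x'‖) • y with hz
  have hzn : ‖z‖ = ‖x‖ := by
    rw [hz, norm_smul, hyn, Real.norm_of_nonneg (by positivity)]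
    field_simp
  have hzy : dist z y = |‖x‖ - ‖x'‖| := by
    have : z - y = (‖x‖ / ‖x'‖ - 1) • y := by rw [hz, sub_smul, one_smul]
    rw [dist_eq_norm, this, norm_smul, hyn, Real.norm_eq_abs]
    nth_rw 2 [← abs_of_pos hpos]
    rw [← abs_mul]
    congr 1
    field_simp
  have hd : dist z y < δ := by
    rw [hzy]
    exact (abs_norm_sub_norm_le x x').trans_lt (by rwa [← dist_eq_norm])
  have h1 := hδ z (by simpa [hzn] using hx) y (by simpa [hyn] using hx') hd
  have h2 : w x ≤ u z := (hw x hx.1 hx.2).2 ⟨z, by simp [hzn], rfl⟩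
  rw [Real.dist_eq] at h1
  linarith [(abs_lt.1 h1).2]

lemma isCompact_annulus (n : ℕ) (a b : ℝ) :
    IsCompact {x : EuclideanSpace ℝ (Fin n) | a ≤ ‖x‖ ∧ ‖x‖ ≤ b} := by
  refine Metric.isCompact_of_isClosed_isBounded ?_ ?_
  · exact (isClosed_le continuous_const continuous_norm).inter
      (isClosed_le continuous_norm continuous_const)
  · exact (Metric.isBounded_closedBall (x := 0) (r := b)).subset fun x hx => by
      simpa using hx.2

/-- **The radial minimum envelope of a supersolution is a supersolution.**
Let `Ω = {a < |x| < b}` and let `u` be continuous on the closed annulus and a viscosity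
supersolution of `(1 − d div(Du/√(1+|Du|²)))√(1+|Du|²) ≥ 1` in `Ω`. If
`w(x) = min_{|y|=|x|} u(y)`, then `w` is continuous on `Ω` and is again a viscosity
supersolution of the same inequality in `Ω`. -/
theorem stmt_15 (n : ℕ) (hn : 2 ≤ n) (d a b : ℝ) (hd : 0 < d)
    (ha : 0 < a) (hab : a < b)
    (Ω : Set (EuclideanSpace ℝ (Fin n)))
    (hΩ : Ω = {x : EuclideanSpace ℝ (Fin n) | a < ‖x‖ ∧ ‖x‖ < b})
    (u : EuclideanSpace ℝ (Fin n) → ℝ)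
    (hucont : ContinuousOn u {x : EuclideanSpace ℝ (Fin n) | a ≤ ‖x‖ ∧ ‖x‖ ≤ b})
    (husuper : IsSupersolOne d Ω u)
    (w : EuclideanSpace ℝ (Fin n) → ℝ)
    (hw : ∀ x : EuclideanSpace ℝ (Fin n), a ≤ ‖x‖ → ‖x‖ ≤ b →
      IsLeast (u '' Metric.sphere 0 ‖x‖) (w x)) :
    ContinuousOn w Ω ∧ IsSupersolOne d Ω w := by
  constructor
  · have huc := (isCompact_annulus n a b).uniformContinuousOn_of_continuous hucont
    rw [Metric.uniformContinuousOn_iff] at huc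
    rw [Metric.continuousOn_iff]
    intro x hx ε hε
    obtain ⟨δ, hδ0, hδ⟩ := huc ε hε
    refine ⟨δ, hδ0, fun y hy hyx => ?_⟩
    rw [hΩ] at hx hy
    have hx' : a ≤ ‖x‖ ∧ ‖x‖ ≤ b := ⟨hx.1.le, hx.2.le⟩
    have hy' : a ≤ ‖y‖ ∧ ‖y‖ ≤ b := ⟨hy.1.le, hy.2.le⟩
    have h1 := envelope_lt_add ha hw hδ hy' hx' hyx
    have h2 := envelope_lt_add ha hw hδ hx' hy' (by rwa [dist_comm])
    rw [Real.dist_eq, abs_lt]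
    constructor <;> linarith
  · intro φ hφ xb hxb hmin
    have hxb' : a < ‖xb‖ ∧ ‖xb‖ < b := by rwa [hΩ] at hxb
    obtain ⟨y₀, hy₀, hy₀w⟩ := (hw xb hxb'.1.le hxb'.2.le).1
    have hy₀n : ‖xb‖ = ‖y₀‖ := by simpa using hy₀.symm
    obtain ⟨L, hL⟩ := exists_isometry_map_eq hy₀n
    have hLs : L.symm y₀ = xb := by rw [← hL, L.symm_apply_apply]
    have hy₀Ω : y₀ ∈ Ω := by rw [hΩ]; simpa [← hy₀n] using hxb'
    have hmaps : Set.MapsTo L.symm Ω Ω := by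
      intro y hy
      rw [hΩ] at hy ⊢
      simpa using hy
    have htend : Filter.Tendsto L.symm (nhdsWithin y₀ Ω) (nhdsWithin xb Ω) := by
      rw [← hLs]
      exact L.symm.continuous.continuousWithinAt.tendsto_nhdsWithin hmaps
    have hmin' : IsLocalMinOn (fun y => u y - (φ ∘ L.symm) y) Ω y₀ := by
      filter_upwards [htend.eventually hmin, self_mem_nhdsWithin] with y hy hyΩ
      rw [hΩ] at hyΩ
      have hle : w (L.symm y) ≤ u y :=
        (hw (L.symm y) (by simpa using hyΩ.1.le) (by simpa using hyΩ.2.le)).2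
          ⟨y, by simp, rfl⟩
      simp only [Function.comp_apply, hLs, hy₀w]
      linarith
    have key := husuper (φ ∘ L.symm) (hφ.comp L.symm.contDiff) y₀ hy₀Ω hmin'
    rwa [divg_flux0_comp_symm, gradient_comp_symm, L.norm_map, hLs] at key
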